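/- In the damped model, let μ = (Σ_{k≠1} d_k)/d₁, and let ε, γ satisfy 0 < ε < 1/2 and 0 < γ < ε. Then there exists δ > 0, depending only on μ, ε and γ, such that for every admissible weight function g₂ with L⁻(g₂) ≥ δ and every weight function g₁ (admissible or the constant 1), the map f has a fixed point in Σ_ε = {x ∈ Σ : x₁ ≥ 1 − ε}. -/

import Mathlib

open Set Matrix

/-- An admissible weight function. -/
def IsAdmissible (g g' : ℝ → ℝ) : Prop :=
  (∀ x ∈ Set.Icc (0:ℝ) 1, HasDerivWithinAt g (g' x) (Set.Icc (0:ℝ) 1) x) ∧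
  ContinuousOn g' (Set.Icc (0:ℝ) 1) ∧
  g 0 = 1 ∧
  (∀ x ∈ Set.Icc (0:ℝ) 1, 0 < g x) ∧
  (∀ x ∈ Set.Icc (0:ℝ) 1, 0 < g' x)

/-- A weight function for the damped model: either admissible or the constant `1`. -/
def IsWeight (g g' : ℝ → ℝ) : Prop :=
  (∀ x ∈ Set.Icc (0:ℝ) 1, HasDerivWithinAt g (g' x) (Set.Icc (0:ℝ) 1) x) ∧
  ContinuousOn g' (Set.Icc (0:ℝ) 1) ∧
  g 0 = 1 ∧
  (∀ x ∈ Set.Icc (0:ℝ) 1, 0 < g x) ∧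
  ((∀ x ∈ Set.Icc (0:ℝ) 1, 0 < g' x) ∨
    ((∀ x ∈ Set.Icc (0:ℝ) 1, g x = 1) ∧ ∀ x ∈ Set.Icc (0:ℝ) 1, g' x = 0))

/-- The set of values `g'(x)/g(x)` for `x ∈ [0,1]`; its minimum is `L⁻(g)`. -/
def ratioSet (g g' : ℝ → ℝ) : Set ℝ := (fun x => g' x / g x) '' Set.Icc (0:ℝ) 1

/-- The damped transition matrix. -/
noncomputable def Md {n : ℕ} (C : Matrix (Fin n) (Fin n) ℝ) (d : Fin n → ℝ)
    (γ : ℝ) (g₁ g₂ : ℝ → ℝ) (x : Fin n → ℝ) : Matrix (Fin n) (Fin n) ℝ :=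
  Matrix.of fun i j =>
    γ * (C i j * g₁ (x j) / ∑ k, C i k * g₁ (x k)) +
    (1 - γ) * (d j * g₂ (x j) / ∑ k, d k * g₂ (x k))

/-- The map `f(x) = x · M(x)` of the damped model. -/
noncomputable def fd {n : ℕ} (C : Matrix (Fin n) (Fin n) ℝ) (d : Fin n → ℝ)
    (γ : ℝ) (g₁ g₂ : ℝ → ℝ) (x : Fin n → ℝ) : Fin n → ℝ :=
  Matrix.vecMul x (Md C d γ g₁ g₂ x)

/-!
For `x ∈ Σ_ε` every coordinate other than the first is at most `ε`, so the arguments of the weights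
differ by at least `1 - 2ε`. Since `g₂' ≥ δ g₂`, the function `g₂` grows at least like `exp (δ t)`,
and for large `δ` the teleportation row puts mass at least `(1 - ε) / (1 - γ)` on the first
coordinate. Hence `f` maps `Σ_ε` to itself, whatever the link matrix does with the remaining mass
`γ < ε`, and Brouwer's theorem applies because `Σ_ε` is a scaled copy of `Σ`.

Brouwer's theorem for the simplex is obtained by Scarf's method. Each point `x` of a fine finite net
is coloured by a coordinate `i` with `x i ≤ F x i`, and the agent `i` ranks the points by their
`i`-th coordinate. A parity argument on dominant sets, in the style of Sperner's lemma, yields a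
dominant set on which each coordinate is either small or occurs as a colour. Dominance bounds the
diameter of this set by a multiple of the mesh of the net, so in the limit a point `p` with
`p ≤ F p` appears; as both sides have sum `1`, it is fixed.
-/

section Finite

variable {A B : Type*} [DecidableEq A] [DecidableEq B] {f : A → B} {s : Finset A}

lemma image_erase_of_map_eq {a b : A} (hb : b ∈ s) (hab : a ≠ b) (hf : f a = f b) :
    (s.erase a).image f = s.image f := by
  refine (Finset.image_subset_image (s.erase_subset a)).antisymm fun y hy => ?_
  obtain ⟨x, hx, rfl⟩ := Finset.mem_image.1 hy
  rcases eq_or_ne x a with rfl | hxa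
  · exact hf ▸ Finset.mem_image_of_mem f (Finset.mem_erase.2 ⟨hab.symm, hb⟩)
  · exact Finset.mem_image_of_mem f (Finset.mem_erase.2 ⟨hxa, hx⟩)

lemma card_filter_image_erase_eq_two (h : (s.image f).card + 1 = s.card) :
    (s.filter fun e => (s.erase e).image f = s.image f).card = 2 := by
  obtain ⟨a, ha, b, hb, hab, hf⟩ := Finset.exists_ne_map_eq_of_card_lt_of_maps_to
    (by omega : (s.image f).card < s.card) (fun x hx => Finset.mem_image_of_mem f hx)
  suffices (s.filter fun e => (s.erase e).image f = s.image f) = {a, b} by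
    rw [this, Finset.card_pair hab]
  ext e
  simp only [Finset.mem_filter, Finset.mem_insert, Finset.mem_singleton]
  constructor
  · rintro ⟨he, himage⟩
    have hinj : Set.InjOn f (s.erase e) := by
      apply Finset.injOn_of_card_image_eq
      rw [himage, Finset.card_erase_of_mem he]
      omega
    by_contra! hne
    exact hab (hinj (by simp [ha, hne.1.symm]) (by simp [hb, hne.2.symm]) hf)
  · rintro (rfl | rfl)
    · exact ⟨ha, image_erase_of_map_eq hb hab hf⟩
    · exact ⟨hb, image_erase_of_map_eq ha hab.symm hf.symm⟩

lemma even_card_filter_image_erase [Fintype B] (i : B) (hcard : s.card = Fintype.card B)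
    (hs : s.image f ≠ Finset.univ) :
    Even (s.filter fun z => (s.erase z).image f = Finset.univ.erase i).card := by
  rcases (s.filter fun z => (s.erase z).image f = Finset.univ.erase i).eq_empty_or_nonempty
    with hempty | ⟨z, hz⟩
  · simp [hempty]
  have hsub : Finset.univ.erase i ⊆ s.image f :=
    (Finset.mem_filter.1 hz).2 ▸ Finset.image_subset_image (s.erase_subset z)
  have himage : s.image f = Finset.univ.erase i := by
    refine hsub.antisymm' (Finset.subset_erase.2 ⟨Finset.subset_univ _, fun hi => hs ?_⟩)
    rw [← Finset.insert_erase (Finset.mem_univ i)]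
    exact ((Finset.insert_subset hi hsub).antisymm
      (by rw [Finset.insert_erase (Finset.mem_univ i)]; exact Finset.subset_univ _)).symm
  have hcard' : (s.image f).card + 1 = s.card := by
    rw [himage, Finset.card_erase_add_one (Finset.mem_univ i), Finset.card_univ, hcard]
  rw [← himage, card_filter_image_erase_eq_two hcard']
  exact even_two

end Finite

section Scarf

variable {I Z α : Type*} [LinearOrder α]

/-- Scarf's dominance of a set `S` of alternatives with respect to the rankings `r i` of the
agents `i`: no alternative is ranked strictly above some member of `S` by every agent (where the
member may depend on the agent). -/
def IsDominant (r : I → Z → α) (S : Finset Z) : Prop :=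
  ∀ y, ∃ i, ∀ z ∈ S, r i y ≤ r i z

/-- The function `m` selects for each agent `i` the member of `τ` that `i` ranks lowest. -/
def SelectsWorst (r : I → Z → α) (τ : Finset Z) (m : I → Z) : Prop :=
  ∀ i, m i ∈ τ ∧ ∀ z ∈ τ, r i (m i) ≤ r i z

/-- The alternatives that every agent `k` other than `a` ranks strictly above `m k`. -/
def improvements (r : I → Z → α) (m : I → Z) (a : I) : Set Z :=
  {y | ∀ k, k ≠ a → r k (m k) < r k y}

/-- The alternative `z` is a best one for `a` among the improvements over `m` for all the other
agents: the alternative entering in Scarf's pivot step when `a` gives up `m a`. -/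
def IsPivot (r : I → Z → α) (m : I → Z) (a : I) (z : Z) : Prop :=
  z ∈ improvements r m a ∧ ∀ y ∈ improvements r m a, r a y ≤ r a z

section Pivot

variable {r : I → Z → α} {τ : Finset Z} {m : I → Z} {a b : I} {y z : Z}

lemma IsDominant.mono {S : Finset Z} (hS : IsDominant r S) (h : τ ⊆ S) : IsDominant r τ :=
  fun y => (hS y).imp fun _ hi z hz => hi z (h hz)

lemma IsPivot.eq (hr : ∀ i, Function.Injective (r i)) (hy : IsPivot r m a y)
    (hz : IsPivot r m a z) : y = z :=
  hr a ((hz.2 y hy.1).antisymm (hy.2 z hz.1))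

lemma IsDominant.le_of_mem_improvements (hτ : IsDominant r τ) (hm : SelectsWorst r τ m)
    (hy : y ∈ improvements r m a) : ∀ z ∈ τ, r a y ≤ r a z := by
  obtain ⟨i, hi⟩ := hτ y
  rcases eq_or_ne i a with rfl | hia
  · exact hi
  · exact absurd (hi _ (hm i).1) (hy i hia).not_ge

lemma IsDominant.not_isPivot_of_ne (hτ : IsDominant r τ) (hm : SelectsWorst r τ m)
    (hab : a ≠ b) (ha : IsPivot r m a z) : ¬ IsPivot r m b z := fun hb =>
  (ha.1 b hab.symm).not_ge (hτ.le_of_mem_improvements hm hb.1 _ (hm b).1)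

variable [DecidableEq Z] [Fintype I]

lemma IsDominant.image_worst (hr : ∀ i, Function.Injective (r i)) (hτ : IsDominant r τ)
    (hm : SelectsWorst r τ m) : Finset.univ.image m = τ := by
  refine (Finset.image_subset_iff.2 fun i _ => (hm i).1).antisymm fun z hz => ?_
  obtain ⟨i, hi⟩ := hτ z
  have : m i = z := hr i (((hm i).2 z hz).antisymm (hi _ (hm i).1))
  exact this ▸ Finset.mem_image_of_mem m (Finset.mem_univ i)

variable [DecidableEq I]

lemma IsPivot.isDominant_insert (hτ : IsDominant r τ) (hm : SelectsWorst r τ m)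
    (ha : (Finset.univ.erase a).image m = τ) (hz : IsPivot r m a z) :
    z ∉ τ ∧ IsDominant r (insert z τ) := by
  refine ⟨fun hzτ => ?_, fun y => ?_⟩
  · obtain ⟨k, hk, rfl⟩ := Finset.mem_image.1 (ha ▸ hzτ)
    exact lt_irrefl _ (hz.1 k (Finset.ne_of_mem_erase hk))
  by_cases hy : y ∈ improvements r m a
  · exact ⟨a, Finset.forall_mem_insert _ _ _ |>.2
      ⟨hz.2 y hy, hτ.le_of_mem_improvements hm hy⟩⟩
  · simp only [improvements, Set.mem_ofPred_eq, not_forall, not_lt] at hy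
    obtain ⟨k, hka, hk⟩ := hy
    exact ⟨k, Finset.forall_mem_insert _ _ _ |>.2
      ⟨hk.trans (hz.1 k hka).le, fun w hw => hk.trans ((hm k).2 w hw)⟩⟩

lemma exists_isPivot_of_isDominant_insert (hr : ∀ i, Function.Injective (r i))
    (hcard : τ.card + 1 = Fintype.card I) (hm : SelectsWorst r τ m) (hzτ : z ∉ τ)
    (hz : IsDominant r (insert z τ)) :
    ∃ a, (Finset.univ.erase a).image m = τ ∧ IsPivot r m a z := by
  obtain ⟨a, ha⟩ := hz z
  have hworst : ∀ w ∈ τ, ∃ k, k ≠ a ∧ m k = w ∧ r k w < r k z := by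
    intro w hw
    obtain ⟨k, hk⟩ := hz w
    have hwz : w ≠ z := ne_of_mem_of_not_mem hw hzτ
    have hlt := (hk z (Finset.mem_insert_self z τ)).lt_of_ne ((hr k).ne hwz)
    refine ⟨k, ?_, ?_, hlt⟩
    · rintro rfl
      exact hlt.not_ge (ha w (Finset.mem_insert_of_mem hw))
    · exact hr k (((hm k).2 w hw).antisymm (hk _ (Finset.mem_insert_of_mem (hm k).1)))
  have himage : (Finset.univ.erase a).image m = τ := by
    refine (Finset.image_subset_iff.2 fun i _ => (hm i).1).antisymm fun w hw => ?_
    obtain ⟨k, hka, rfl, -⟩ := hworst w hw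
    exact Finset.mem_image_of_mem m (Finset.mem_erase.2 ⟨hka, Finset.mem_univ k⟩)
  have hinj : Set.InjOn m (Finset.univ.erase a : Finset I) := by
    apply Finset.injOn_of_card_image_eq
    rw [himage, Finset.card_erase_of_mem (Finset.mem_univ a), Finset.card_univ]
    omega
  refine ⟨a, himage, fun k hka => ?_, fun y hy => ?_⟩
  · obtain ⟨l, hla, hlk, hlt⟩ := hworst _ (hm k).1
    obtain rfl : l = k := hinj (by simp [hla]) (by simp [hka]) hlk
    exact hlt
  · obtain ⟨i, hi⟩ := hz y
    rcases eq_or_ne i a with rfl | hia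
    · exact hi z (Finset.mem_insert_self z τ)
    · exact absurd (hi _ (Finset.mem_insert_of_mem (hm i).1)) (hy i hia).not_ge

omit [DecidableEq I] in
open scoped Classical in
lemma card_filter_isDominant_insert_eq_two [Fintype Z] (hr : ∀ i, Function.Injective (r i))
    (hτ : IsDominant r τ) (hcard : τ.card + 1 = Fintype.card I) (hm : SelectsWorst r τ m)
    (hpivot : ∀ a, ∃ z, IsPivot r m a z) :
    (Finset.univ.filter fun z => z ∉ τ ∧ IsDominant r (insert z τ)).card = 2 := by
  -- Dropping the choice of `a` keeps all of `τ` exactly when that choice is shared; `m` maps the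
  -- agents onto one alternative fewer, so just two agents share theirs, and each has one pivot.
  choose p hp using hpivot
  have hfilter : (Finset.univ.filter fun z => z ∉ τ ∧ IsDominant r (insert z τ)) =
      (Finset.univ.filter fun a =>
        (Finset.univ.erase a).image m = Finset.univ.image m).image p := by
    ext z
    simp only [Finset.mem_filter, Finset.mem_univ, true_and, Finset.mem_image,
      hτ.image_worst hr hm]
    constructor
    · rintro ⟨hzτ, hz⟩
      obtain ⟨a, ha, hza⟩ := exists_isPivot_of_isDominant_insert hr hcard hm hzτ hz
      exact ⟨a, ha, (hp a).eq hr hza⟩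
    · rintro ⟨a, ha, rfl⟩
      exact (hp a).isDominant_insert hτ hm ha
  have hinj : Function.Injective p := fun a b hab => by
    by_contra hne
    exact hτ.not_isPivot_of_ne hm hne (hp a) (hab ▸ hp b)
  rw [hfilter, Finset.card_image_of_injective _ hinj, card_filter_image_erase_eq_two]
  rw [hτ.image_worst hr hm, hcard, Finset.card_univ]

end Pivot

/-- The rankings `r` have no ties, and the alternatives `s i` are their corners: agent `i`
ranks the corner `s i` lowest and all other corners above every alternative that is not a corner. -/
structure IsCornered (r : I → Z → α) (s : I → Z) : Prop where
  injective_rank (i : I) : Function.Injective (r i)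
  injective_corner : Function.Injective s
  corner_le (i : I) (z : Z) : r i (s i) ≤ r i z
  lt_corner {i j : I} {z : Z} (hji : j ≠ i) (hz : z ∉ Set.range s) : r i z < r i (s j)

section Parity

variable [Fintype I] [DecidableEq I] [Fintype Z] [DecidableEq Z]
  {r : I → Z → α} {s : I → Z} {c : Z → I} {τ : Finset Z}

omit [Fintype Z] in
lemma IsCornered.exists_isPivot [Finite Z] (h : IsCornered r s) {m : I → Z}
    (hm : SelectsWorst r τ m) (hτ : ∀ i, ¬ τ ⊆ (Finset.univ.erase i).image s) (a : I) :
    ∃ z, IsPivot r m a z := by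
  refine Set.exists_max_image _ (r a) (Set.toFinite (improvements r m a)) ⟨s a, fun k hka => ?_⟩
  obtain ⟨x, hxτ, hx⟩ := Finset.not_subset.1 (hτ k)
  refine ((hm k).2 x hxτ).trans_lt ?_
  by_cases hxs : x ∈ Set.range s
  · obtain ⟨j, rfl⟩ := hxs
    obtain rfl : j = k := by
      by_contra hjk
      exact hx (Finset.mem_image_of_mem s (by simp [hjk]))
    exact (h.corner_le j _).lt_of_ne ((h.injective_rank j).ne (h.injective_corner.ne hka))
  · exact h.lt_corner hka.symm hxs

open scoped Classical in
lemma IsCornered.card_filter_isDominant_insert_corners (h : IsCornered r s)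
    (hs : ∃ z, z ∉ Set.range s) (i₀ : I) :
    (Finset.univ.filter fun z => z ∉ (Finset.univ.erase i₀).image s ∧
      IsDominant r (insert z ((Finset.univ.erase i₀).image s))).card = 1 := by
  obtain ⟨x, hx, hmax⟩ := Set.exists_max_image _ (r i₀) (Set.toFinite (Set.range s)ᶜ) hs
  refine Finset.card_eq_one.2 ⟨x, ?_⟩
  ext z
  simp only [Finset.mem_filter, Finset.mem_univ, true_and, Finset.mem_singleton]
  constructor
  · rintro ⟨hz, hdom⟩
    have hzmax : ∀ y ∉ Set.range s, r i₀ y ≤ r i₀ z := by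
      intro y hy
      obtain ⟨i, hi⟩ := hdom y
      rcases eq_or_ne i i₀ with rfl | hii
      · exact hi z (Finset.mem_insert_self _ _)
      · have hle := hi (s i)
          (Finset.mem_insert_of_mem (Finset.mem_image_of_mem s (by simp [hii])))
        exact absurd ⟨i, h.injective_rank i ((h.corner_le i y).antisymm hle)⟩ hy
    have hzs : z ∉ Set.range s := by
      rintro ⟨j, rfl⟩
      rcases eq_or_ne j i₀ with rfl | hj
      · exact hx ⟨j, h.injective_rank j ((h.corner_le j x).antisymm (hzmax x hx))⟩
      · exact hz (Finset.mem_image_of_mem s (by simp [hj]))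
    exact h.injective_rank i₀ ((hmax z hzs).antisymm (hzmax x hx))
  · rintro rfl
    refine ⟨fun hz => ?_, fun y => ?_⟩
    · obtain ⟨j, -, hj⟩ := Finset.mem_image.1 hz
      exact hx ⟨j, hj⟩
    · by_cases hy : y ∈ Set.range s
      · obtain ⟨j, rfl⟩ := hy
        exact ⟨j, fun w _ => h.corner_le j w⟩
      · refine ⟨i₀, Finset.forall_mem_insert _ _ _ |>.2 ⟨hmax y hy, fun w hw => ?_⟩⟩
        obtain ⟨j, hj, rfl⟩ := Finset.mem_image.1 hw
        exact (h.lt_corner (Finset.ne_of_mem_erase hj) hy).le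

open scoped Classical in
lemma IsCornered.even_card_filter_isDominant_insert (h : IsCornered r s)
    (hc : ∀ i, c (s i) = i) {i₀ : I} (hcard : τ.card + 1 = Fintype.card I)
    (hcol : τ.image c = Finset.univ.erase i₀) (hne : τ ≠ (Finset.univ.erase i₀).image s) :
    Even (Finset.univ.filter fun z => z ∉ τ ∧ IsDominant r (insert z τ)).card := by
  by_cases hτ : IsDominant r τ
  · have hnot : ∀ i, ¬ τ ⊆ (Finset.univ.erase i).image s := by
      intro i hsub
      have heq : τ = (Finset.univ.erase i).image s := by
        apply Finset.eq_of_subset_of_card_le hsub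
        rw [Finset.card_image_of_injective _ h.injective_corner,
          Finset.card_erase_of_mem (Finset.mem_univ i), Finset.card_univ]
        omega
      have hii : Finset.univ.erase i = Finset.univ.erase i₀ := by
        rw [← hcol, heq, Finset.image_image, show c ∘ s = id from funext hc, Finset.image_id]
      exact hne (hii ▸ heq)
    have hnonempty : τ.Nonempty :=
      Finset.nonempty_iff_ne_empty.2 fun h => hnot i₀ (h ▸ Finset.empty_subset _)
    choose m hm using fun i => τ.exists_min_image (r i) hnonempty
    rw [card_filter_isDominant_insert_eq_two h.injective_rank hτ hcard hm
      (h.exists_isPivot hm hnot)]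
    exact even_two
  · have hempty : (Finset.univ.filter fun z => z ∉ τ ∧ IsDominant r (insert z τ)) = ∅ :=
      Finset.filter_eq_empty_iff.2 fun z _ hz => hτ (hz.2.mono (Finset.subset_insert z τ))
    simp [hempty]

/-- The almost completely coloured faces: one element short of a room, and missing exactly the
colour `i₀`. They are the doors of the parity argument. -/
def doors (c : Z → I) (i₀ : I) : Finset (Finset Z) :=
  Finset.univ.filter fun τ => τ.card + 1 = Fintype.card I ∧ τ.image c = Finset.univ.erase i₀

open scoped Classical in
/-- The dominant sets with as many members as there are agents: the rooms of the parity
argument. -/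
noncomputable def rooms (r : I → Z → α) : Finset (Finset Z) :=
  Finset.univ.filter fun σ => σ.card = Fintype.card I ∧ IsDominant r σ

open scoped Classical in
lemma sum_doors_eq_sum_rooms (r : I → Z → α) (c : Z → I) (i₀ : I) :
    ∑ τ ∈ doors c i₀, (Finset.univ.filter fun z => z ∉ τ ∧ IsDominant r (insert z τ)).card =
      ∑ σ ∈ rooms r, (σ.filter fun z => (σ.erase z).image c = Finset.univ.erase i₀).card := by
  rw [← Finset.card_sigma, ← Finset.card_sigma]
  refine Finset.card_nbij' (fun p => ⟨insert p.2 p.1, p.2⟩) (fun p => ⟨p.1.erase p.2, p.2⟩)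
    ?_ ?_ ?_ ?_
  · rintro ⟨τ, z⟩ hp
    simp only [doors, Finset.coe_sigma, Set.mem_sigma_iff, Finset.mem_coe, Finset.mem_filter,
      Finset.mem_univ, true_and] at hp
    obtain ⟨⟨hcard, hcol⟩, hz, hdom⟩ := hp
    simp [rooms, hcard, hcol, hz, hdom]
  · rintro ⟨σ, z⟩ hp
    simp only [rooms, Finset.coe_sigma, Set.mem_sigma_iff, Finset.mem_coe, Finset.mem_filter,
      Finset.mem_univ, true_and] at hp
    obtain ⟨⟨hcard, hdom⟩, hz, hcol⟩ := hp
    simp [doors, Finset.card_erase_add_one hz, Finset.insert_erase hz, hcard, hcol, hdom]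
  · rintro ⟨τ, z⟩ hp
    have hz : z ∉ τ := (Finset.mem_filter.1 (Finset.mem_sigma.1 hp).2).2.1
    simp [Finset.erase_insert hz]
  · rintro ⟨σ, z⟩ hp
    have hz : z ∈ σ := (Finset.mem_filter.1 (Finset.mem_sigma.1 hp).2).1
    simp [Finset.insert_erase hz]

omit [Fintype Z] [DecidableEq Z] in
theorem IsCornered.exists_isDominant_image_eq_univ [Nonempty I] [Finite Z] (h : IsCornered r s)
    (hs : ∃ z, z ∉ Set.range s) (hc : ∀ i, c (s i) = i) :
    ∃ S : Finset Z, IsDominant r S ∧ S.image c = Finset.univ := by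
  classical
  cases nonempty_fintype Z
  by_contra! hno
  obtain ⟨i₀⟩ := ‹Nonempty I›
  have hcorner : (Finset.univ.erase i₀).image s ∈ doors c i₀ := by
    simp only [doors, Finset.mem_filter, Finset.mem_univ, true_and]
    rw [Finset.card_image_of_injective _ h.injective_corner,
      Finset.card_erase_add_one (Finset.mem_univ i₀), Finset.card_univ, Finset.image_image,
      show c ∘ s = id from funext hc, Finset.image_id]
    exact ⟨rfl, rfl⟩
  have hrooms : Even (∑ σ ∈ rooms r,
      (σ.filter fun z => (σ.erase z).image c = Finset.univ.erase i₀).card) := by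
    refine Finset.even_sum _ fun σ hσ => ?_
    obtain ⟨-, hcard, hdom⟩ := Finset.mem_filter.1 hσ
    exact even_card_filter_image_erase i₀ hcard (hno σ hdom)
  have hothers : Even (∑ τ ∈ (doors c i₀).erase ((Finset.univ.erase i₀).image s),
      (Finset.univ.filter fun z => z ∉ τ ∧ IsDominant r (insert z τ)).card) := by
    refine Finset.even_sum _ fun τ hτ => ?_
    obtain ⟨hne, hdoor⟩ := Finset.mem_erase.1 hτ
    obtain ⟨-, hcard, hcol⟩ := Finset.mem_filter.1 hdoor
    exact h.even_card_filter_isDominant_insert hc hcard hcol hne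
  rw [← sum_doors_eq_sum_rooms, ← Finset.add_sum_erase _ _ hcorner,
    h.card_filter_isDominant_insert_corners hs i₀, Nat.even_add] at hrooms
  exact Nat.not_even_one (hrooms.2 hothers)

end Parity

/-- Agent `i`'s utility, extended to one corner per agent: its own corner becomes the least and
the other corners become the greatest alternatives. -/
def cornerUtility [DecidableEq I] {X : Type*} (u : I → X → α) (i : I) :
    X ⊕ I → WithBot (WithTop α) :=
  Sum.elim (fun x => ((u i x : WithTop α) : WithBot (WithTop α)))
    (fun j => if j = i then ⊥ else ((⊤ : WithTop α) : WithBot (WithTop α)))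

lemma isCornered_cornerUtility [DecidableEq I] {X β : Type*} [LinearOrder β] (u : I → X → α)
    {e : X ⊕ I → β} (he : Function.Injective e) :
    IsCornered (fun i z => toLex (cornerUtility u i z, e z)) Sum.inr where
  injective_rank i _ _ hyz := he (congrArg (fun p => (ofLex p).2) hyz)
  injective_corner := Sum.inr_injective
  corner_le i z := by
    rcases z with x | j
    · exact (Prod.Lex.toLex_lt_toLex.2 (Or.inl (by simp [cornerUtility]))).le
    · rcases eq_or_ne j i with rfl | hji
      · exact le_rfl
      · exact (Prod.Lex.toLex_lt_toLex.2 (Or.inl (by simp [cornerUtility, hji]))).le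
  lt_corner {i j z} hji hz := by
    rcases z with x | k
    · refine Prod.Lex.toLex_lt_toLex.2 (Or.inl ?_)
      simp only [cornerUtility, Sum.elim_inl, Sum.elim_inr, if_neg hji]
      exact WithBot.coe_lt_coe.2 (WithTop.coe_lt_top _)
    · exact absurd ⟨k, rfl⟩ hz

/-- Petri and Voorneveld's no-bullying lemma. -/
theorem exists_dominating_agents_of_coloring [Finite I] {X : Type*} [Finite X] [Nonempty X]
    (u : I → X → α) (c : X → I) :
    ∃ (S : Set X) (J : Set I),
      (∀ y, ∃ i ∈ J, ∀ x ∈ S, u i y ≤ u i x) ∧ ∀ i ∈ J, ∃ x ∈ S, c x = i := by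
  classical
  cases nonempty_fintype I
  cases nonempty_fintype X
  obtain ⟨x₀⟩ := ‹Nonempty X›
  have : Nonempty I := ⟨c x₀⟩
  have hcorner := isCornered_cornerUtility u (Fintype.equivFin (X ⊕ I)).injective
  obtain ⟨S, hdom, hcol⟩ := hcorner.exists_isDominant_image_eq_univ ⟨Sum.inl x₀, by simp⟩
    (c := Sum.elim c id) (fun _ => rfl)
  refine ⟨{x | Sum.inl x ∈ S}, {i | Sum.inr i ∉ S}, fun y => ?_, fun i hi => ?_⟩
  · obtain ⟨i, hi⟩ := hdom (Sum.inl y)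
    have hle : ∀ z ∈ S, cornerUtility u i (Sum.inl y) ≤ cornerUtility u i z := fun z hz =>
      (Prod.Lex.toLex_le_toLex.1 (hi z hz)).elim le_of_lt fun h => h.1.le
    exact ⟨i, fun hiS => by simpa [cornerUtility] using hle _ hiS, fun x hx => by
      simpa [cornerUtility] using hle _ hx⟩
  · obtain ⟨z, hz, hzi⟩ := Finset.mem_image.1 (hcol ▸ Finset.mem_univ i)
    rcases z with x | k
    · exact ⟨x, hz, hzi⟩
    · exact absurd ((show k = i from hzi) ▸ hz) hi

end Scarf

section Simplex

variable {ι : Type*} [Fintype ι]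

lemma exists_mem_stdSimplex_le [Nonempty ι] {a : ι → ℝ} (ha : 0 ≤ a) (hsum : ∑ i, a i ≤ 1) :
    ∃ y ∈ stdSimplex ℝ ι, a ≤ y := by
  classical
  obtain ⟨j⟩ := ‹Nonempty ι›
  have hsingle : 0 ≤ (Pi.single j (1 - ∑ i, a i) : ι → ℝ) :=
    Pi.single_nonneg.2 (sub_nonneg.2 hsum)
  refine ⟨a + Pi.single j (1 - ∑ i, a i), ⟨add_nonneg ha hsingle, ?_⟩,
    le_add_of_nonneg_right hsingle⟩
  simp [Finset.sum_add_distrib]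

lemma one_lt_sum_add_of_forall_exists_le [Nonempty ι] {X : Set (ι → ℝ)} {η : ℝ} (hη : 0 ≤ η)
    (hX : stdSimplex ℝ ι ⊆ ⋃ x ∈ X, Metric.ball x η) {b : ι → ℝ} (hb : 0 ≤ b)
    (hXb : ∀ x ∈ X, ∃ i, x i ≤ b i) : 1 < ∑ i, (b i + η) := by
  by_contra! hsum
  obtain ⟨y, hy, hby⟩ := exists_mem_stdSimplex_le (fun i => add_nonneg (hb i) hη) hsum
  obtain ⟨x, hx, hyx⟩ := Set.mem_iUnion₂.1 (hX hy)
  obtain ⟨i, hi⟩ := hXb x hx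
  have hdist : |y i - x i| < η := (dist_le_pi_dist y x i).trans_lt hyx
  have hbyi : b i + η ≤ y i := hby i
  linarith [(abs_lt.1 hdist).2]

lemma le_add_card_mul_of_mem_stdSimplex {b x : ι → ℝ} {η : ℝ} (hx : x ∈ stdSimplex ℝ ι)
    (hbx : b ≤ x) (hsum : 1 ≤ ∑ i, (b i + η)) (i : ι) : x i ≤ b i + Fintype.card ι * η := by
  have hle : x i - b i ≤ ∑ j, (x j - b j) :=
    Finset.single_le_sum (f := fun j => x j - b j) (fun j _ => sub_nonneg.2 (hbx j))
      (Finset.mem_univ i)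
  rw [Finset.sum_sub_distrib, hx.2] at hle
  rw [Finset.sum_add_distrib, Finset.sum_const, Finset.card_univ, nsmul_eq_mul] at hsum
  linarith

lemma exists_mem_stdSimplex_forall_le_or_dist_le [Nonempty ι] {X : Set (ι → ℝ)} (hfin : X.Finite)
    (hXΔ : X ⊆ stdSimplex ℝ ι) {η : ℝ} (hη : 0 ≤ η)
    (hX : stdSimplex ℝ ι ⊆ ⋃ x ∈ X, Metric.ball x η) (c : X → ι) :
    ∃ p ∈ stdSimplex ℝ ι, ∀ i, p i ≤ Fintype.card ι * η ∨
      ∃ x, c x = i ∧ dist p x ≤ Fintype.card ι * η := by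
  classical
  have := hfin.to_subtype
  obtain ⟨y₀, hy₀⟩ := Set.Nonempty.of_subtype (s := stdSimplex ℝ ι)
  obtain ⟨x₀, hx₀, -⟩ := Set.mem_iUnion₂.1 (hX hy₀)
  have : Nonempty X := ⟨x₀, hx₀⟩
  obtain ⟨S, J, hdom, hcol⟩ := exists_dominating_agents_of_coloring (fun i (x : X) => x.1 i) c
  obtain ⟨p, hp⟩ : S.Nonempty := by
    obtain ⟨i, hi, -⟩ := hdom ⟨x₀, hx₀⟩
    obtain ⟨x, hx, -⟩ := hcol i hi
    exact ⟨x, hx⟩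
  choose w hwS hw using fun i => Set.exists_min_image S (fun x => x.1 i) S.toFinite ⟨p, hp⟩
  set b : ι → ℝ := J.indicator fun i => (w i).1 i with hbdef
  have hb : 0 ≤ b := Set.indicator_nonneg fun i _ => (hXΔ (w i).2).1 i
  have hbS : ∀ x ∈ S, b ≤ x.1 := fun x hx =>
    Set.indicator_le' (fun i _ => hw i x hx) fun i _ => (hXΔ x.2).1 i
  have hsum : 1 < ∑ i, (b i + η) := by
    refine one_lt_sum_add_of_forall_exists_le hη hX hb fun x hx => ?_
    obtain ⟨i, hi, hxi⟩ := hdom ⟨x, hx⟩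
    exact ⟨i, by simpa only [hbdef, Set.indicator_of_mem hi] using hxi _ (hwS i)⟩
  have hupper : ∀ x ∈ S, ∀ i, x.1 i ≤ b i + Fintype.card ι * η := fun x hx =>
    le_add_card_mul_of_mem_stdSimplex (hXΔ x.2) (hbS x hx) hsum.le
  refine ⟨p, hXΔ p.2, fun i => ?_⟩
  by_cases hi : i ∈ J
  · obtain ⟨x, hx, hxi⟩ := hcol i hi
    refine Or.inr ⟨x, hxi, (dist_pi_le_iff (by positivity)).2 fun j => abs_sub_le_iff.2 ⟨?_, ?_⟩⟩
    · linarith [hupper p hp j, hbS x hx j]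
    · linarith [hupper x hx j, hbS p hp j]
  · left
    simpa only [hbdef, Set.indicator_of_notMem hi, zero_add] using hupper p hp i

lemma exists_mem_stdSimplex_forall_le_or_mem_cthickening [Nonempty ι] {A : ι → Set (ι → ℝ)}
    (hA : stdSimplex ℝ ι ⊆ ⋃ i, A i) {ε : ℝ} (hε : 0 < ε) :
    ∃ p ∈ stdSimplex ℝ ι, ∀ i, p i ≤ ε ∨ p ∈ Metric.cthickening ε (A i) := by
  have hcard : 0 < (Fintype.card ι : ℝ) := Nat.cast_pos.2 Fintype.card_pos
  have hη : 0 < ε / Fintype.card ι := div_pos hε hcard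
  obtain ⟨X, hXΔ, hfin, hX⟩ := (isCompact_stdSimplex ℝ ι).finite_cover_balls hη
  choose c hc using fun x : X => Set.mem_iUnion.1 (hA (hXΔ x.2))
  obtain ⟨p, hp, hpc⟩ := exists_mem_stdSimplex_forall_le_or_dist_le hfin hXΔ hη.le hX c
  rw [mul_div_cancel₀ ε hcard.ne'] at hpc
  refine ⟨p, hp, fun i => (hpc i).imp_right ?_⟩
  rintro ⟨x, rfl, hx⟩
  exact Metric.mem_cthickening_of_dist_le p x ε _ (hc x) hx

/-- A dual form of the Knaster–Kuratowski–Mazurkiewicz theorem: the closed sets obtained from the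
`A i` by adding the facets `p i = 0` have a common point. -/
theorem exists_mem_stdSimplex_forall_eq_zero_or_mem [Nonempty ι] {A : ι → Set (ι → ℝ)}
    (hclosed : ∀ i, IsClosed (A i)) (hA : stdSimplex ℝ ι ⊆ ⋃ i, A i) :
    ∃ p ∈ stdSimplex ℝ ι, ∀ i, p i = 0 ∨ p ∈ A i := by
  let K (ε : Set.Ioi (0 : ℝ)) : Set (ι → ℝ) :=
    stdSimplex ℝ ι ∩ ⋂ i, ({p : ι → ℝ | p i ≤ ε} ∪ Metric.cthickening ε (A i))
  have hKclosed (ε : Set.Ioi (0 : ℝ)) :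
      IsClosed (⋂ i, ({p : ι → ℝ | p i ≤ ε} ∪ Metric.cthickening ε (A i))) :=
    isClosed_iInter fun i =>
      (isClosed_le (continuous_apply i) continuous_const).union Metric.isClosed_cthickening
  have hKmono : Monotone K := fun ε ε' h =>
    Set.inter_subset_inter_right _ <| Set.iInter_mono fun i =>
      Set.union_subset_union (Set.ofPred_subset_ofPred.2 fun p hp => hp.trans h)
        (Metric.cthickening_mono h _)
  have hKcompact (ε) : IsCompact (K ε) := (isCompact_stdSimplex ℝ ι).inter_right (hKclosed ε)
  obtain ⟨p, hp⟩ := IsCompact.nonempty_iInter_of_directed_nonempty_isCompact_isClosed K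
    hKmono.directed_ge
    (fun ε =>
      let ⟨p, hp, hpA⟩ := exists_mem_stdSimplex_forall_le_or_mem_cthickening hA ε.2
      ⟨p, hp, Set.mem_iInter.2 hpA⟩)
    hKcompact fun ε => (hKcompact ε).isClosed
  have hpK (ε) (hε : 0 < ε) : p ∈ K ⟨ε, hε⟩ := Set.mem_iInter.1 hp ⟨ε, hε⟩
  have hpΔ : p ∈ stdSimplex ℝ ι := (hpK 1 one_pos).1
  refine ⟨p, hpΔ, fun i => or_iff_not_imp_left.2 fun hi => ?_⟩
  have hpi : 0 < p i := lt_of_le_of_ne (hpΔ.1 i) (Ne.symm hi)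
  rw [← (hclosed i).closure_eq, Metric.closure_eq_iInter_cthickening]
  refine Set.mem_iInter₂.2 fun δ hδ => ?_
  have hε : 0 < min δ (p i / 2) := lt_min hδ (half_pos hpi)
  rcases Set.mem_iInter.1 (hpK _ hε).2 i with h | h
  · exact absurd (h.trans (min_le_right _ _)) (half_lt_self hpi).not_ge
  · exact Metric.cthickening_mono (min_le_left _ _) _ h

theorem exists_isFixedPt_of_mapsTo_stdSimplex [Nonempty ι] {F : (ι → ℝ) → ι → ℝ}
    (hF : ContinuousOn F (stdSimplex ℝ ι)) (hmaps : MapsTo F (stdSimplex ℝ ι) (stdSimplex ℝ ι)) :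
    ∃ p ∈ stdSimplex ℝ ι, Function.IsFixedPt F p := by
  have hsum {x : ι → ℝ} (hx : x ∈ stdSimplex ℝ ι) : ∑ i, F x i = ∑ i, x i :=
    (hmaps hx).2.trans hx.2.symm
  obtain ⟨p, hp, hpF⟩ := exists_mem_stdSimplex_forall_eq_zero_or_mem
    (A := fun i => {x ∈ stdSimplex ℝ ι | x i ≤ F x i})
    (fun i => (isClosed_stdSimplex ℝ ι).isClosed_le (by fun_prop) (continuousOn_pi.1 hF i))
    (fun x hx => by
      obtain ⟨i, -, hi⟩ := Finset.exists_le_of_sum_le Finset.univ_nonempty (hsum hx).ge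
      exact Set.mem_iUnion.2 ⟨i, hx, hi⟩)
  have hle : ∀ i ∈ Finset.univ, p i ≤ F p i := fun i _ =>
    (hpF i).elim (fun h => h.trans_le ((hmaps hp).1 i)) And.right
  refine ⟨p, hp, funext fun i => ?_⟩
  exact ((Finset.sum_eq_sum_iff_of_le hle).1 (hsum hp).symm i (Finset.mem_univ i)).symm

theorem exists_isFixedPt_of_mapsTo_stdSimplex_sep {F : (ι → ℝ) → ι → ℝ} {v : ι}
    {ε : ℝ} (hε : 0 < ε) (hε1 : ε ≤ 1)
    (hF : ContinuousOn F {x ∈ stdSimplex ℝ ι | 1 - ε ≤ x v})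
    (hmaps : MapsTo F {x ∈ stdSimplex ℝ ι | 1 - ε ≤ x v} {x ∈ stdSimplex ℝ ι | 1 - ε ≤ x v}) :
    ∃ p ∈ {x ∈ stdSimplex ℝ ι | 1 - ε ≤ x v}, Function.IsFixedPt F p := by
  classical
  have : Nonempty ι := ⟨v⟩
  let e : ι → ℝ := Pi.single v 1
  have he : e ∈ stdSimplex ℝ ι := single_mem_stdSimplex ℝ v
  have hev : e v = 1 := Pi.single_eq_same v 1
  let contract (y : ι → ℝ) : ι → ℝ := ε • y + (1 - ε) • e
  let expand (x : ι → ℝ) : ι → ℝ := ε⁻¹ • (x - (1 - ε) • e)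
  have hcontract : MapsTo contract (stdSimplex ℝ ι) {x ∈ stdSimplex ℝ ι | 1 - ε ≤ x v} := by
    refine fun y hy => ⟨convex_stdSimplex ℝ ι hy he hε.le (sub_nonneg.2 hε1) (by ring), ?_⟩
    simpa [contract, hev] using mul_nonneg hε.le (hy.1 v)
  have hexpand : MapsTo expand {x ∈ stdSimplex ℝ ι | 1 - ε ≤ x v} (stdSimplex ℝ ι) := by
    rintro x ⟨hx, hxv⟩
    refine ⟨fun i => mul_nonneg (inv_nonneg.2 hε.le) (sub_nonneg.2 ?_), ?_⟩
    · rcases eq_or_ne i v with rfl | hi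
      · simpa [hev] using hxv
      · simpa [e, hi] using hx.1 i
    · simp only [expand, Pi.smul_apply, Pi.sub_apply, smul_eq_mul, ← Finset.mul_sum,
        Finset.sum_sub_distrib, hx.2, he.2]
      field_simp
      ring
  have hcontract_expand (x : ι → ℝ) : contract (expand x) = x := by
    simp only [contract, expand, smul_inv_smul₀ hε.ne', sub_add_cancel]
  have hcont : ContinuousOn (expand ∘ F ∘ contract) (stdSimplex ℝ ι) :=
    ((hF.comp (by fun_prop) hcontract).sub continuousOn_const).const_smul ε⁻¹
  obtain ⟨y, hy, hfix⟩ :=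
    exists_isFixedPt_of_mapsTo_stdSimplex hcont ((hexpand.comp hmaps).comp hcontract)
  refine ⟨contract y, hcontract hy, ?_⟩
  calc F (contract y) = contract (expand (F (contract y))) := (hcontract_expand _).symm
    _ = contract y := congrArg contract hfix

end Simplex

section Weight

lemma exp_mul_le_of_mul_le_deriv {s : Set ℝ} (hs : Convex ℝ s) {g g' : ℝ → ℝ} {δ : ℝ}
    (hderiv : ∀ x ∈ s, HasDerivWithinAt g (g' x) s x) (hg' : ∀ x ∈ s, δ * g x ≤ g' x)
    {a b : ℝ} (ha : a ∈ s) (hb : b ∈ s) (hab : a ≤ b) :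
    g a * Real.exp (δ * (b - a)) ≤ g b := by
  have hdamped (x) (hx : x ∈ s) : HasDerivWithinAt (fun y => g y * Real.exp (-δ * y))
      (g' x * Real.exp (-δ * x) + g x * (Real.exp (-δ * x) * -δ)) s x :=
    (hderiv x hx).mul (((hasDerivAt_id x).const_mul (-δ)).exp.hasDerivWithinAt.congr_deriv
      (by simp))
  have hmono : MonotoneOn (fun y => g y * Real.exp (-δ * y)) s := by
    refine monotoneOn_of_hasDerivWithinAt_nonneg hs
      (fun x hx => (hdamped x hx).continuousWithinAt)
      (fun x hx => (hdamped x (interior_subset hx)).mono interior_subset) fun x hx => ?_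
    have := mul_nonneg (sub_nonneg.2 (hg' x (interior_subset hx))) (Real.exp_pos (-δ * x)).le
    linarith
  calc g a * Real.exp (δ * (b - a))
      = g a * Real.exp (-δ * a) * Real.exp (δ * b) := by
        rw [mul_assoc, ← Real.exp_add]
        ring_nf
    _ ≤ g b * Real.exp (-δ * b) * Real.exp (δ * b) :=
        mul_le_mul_of_nonneg_right (hmono ha hb hab) (Real.exp_pos _).le
    _ = g b := by
        rw [mul_assoc, ← Real.exp_add]
        simp

lemma exists_pos_le_mul_exp {a c : ℝ} (ha : 0 < a) (hc : 0 < c) (b : ℝ) :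
    ∃ δ, 0 < δ ∧ b ≤ a * Real.exp (δ * c) := by
  have hlim : Filter.Tendsto (fun δ => a * Real.exp (δ * c)) Filter.atTop Filter.atTop :=
    (Real.tendsto_exp_atTop.comp (Filter.tendsto_id.atTop_mul_const hc)).const_mul_atTop ha
  exact ((Filter.eventually_gt_atTop 0).and (hlim.eventually_ge_atTop b)).exists

lemma IsAdmissible.mul_le_deriv {g g' : ℝ → ℝ} (hg : IsAdmissible g g') {L δ : ℝ}
    (hL : IsLeast (ratioSet g g') L) (hδ : δ ≤ L) : ∀ x ∈ Icc (0 : ℝ) 1, δ * g x ≤ g' x :=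
  fun x hx => (le_div_iff₀ (hg.2.2.2.1 x hx)).1 (hδ.trans (hL.2 ⟨x, hx, rfl⟩))

end Weight

section WeightedTransition

variable {ι : Type*} [Fintype ι] {g : ℝ → ℝ} {x : ι → ℝ}

/-- The transition matrix obtained from the nonnegative matrix `C` by multiplying each column `j`
by the weight `g (x j)` and normalizing the rows. The matrix `Md` of the damped model is a convex
combination of two of these, the second one with all rows of `C` equal to `d`. -/
noncomputable def weightedTransition (C : Matrix ι ι ℝ) (g : ℝ → ℝ) (x : ι → ℝ) : Matrix ι ι ℝ :=
  Matrix.of fun i j => C i j * g (x j) / ∑ k, C i k * g (x k)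

lemma sum_mul_weight_pos {w : ι → ℝ} (hw : ∀ j, 0 ≤ w j) (hw' : ∃ j, 0 < w j)
    (hg : ∀ t ∈ Icc (0 : ℝ) 1, 0 < g t) (hx : x ∈ stdSimplex ℝ ι) :
    0 < ∑ k, w k * g (x k) := by
  have hgx (j : ι) : 0 < g (x j) := hg _ (mem_Icc_of_mem_stdSimplex hx j)
  obtain ⟨j, hj⟩ := hw'
  exact Finset.sum_pos' (fun k _ => mul_nonneg (hw k) (hgx k).le)
    ⟨j, Finset.mem_univ j, mul_pos hj (hgx j)⟩

lemma weightedTransition_mem_rowStochastic [DecidableEq ι] {C : Matrix ι ι ℝ}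
    (hC : ∀ i j, 0 ≤ C i j) (hC' : ∀ i, ∃ j, 0 < C i j) (hg : ∀ t ∈ Icc (0 : ℝ) 1, 0 < g t)
    (hx : x ∈ stdSimplex ℝ ι) : weightedTransition C g x ∈ rowStochastic ℝ ι := by
  have hsum (i : ι) := sum_mul_weight_pos (hC i) (hC' i) hg hx
  refine mem_rowStochastic_iff_sum.2 ⟨fun i j => div_nonneg (mul_nonneg (hC i j)
    (hg _ (mem_Icc_of_mem_stdSimplex hx j)).le) (hsum i).le, fun i => ?_⟩
  simp only [weightedTransition, Matrix.of_apply, ← Finset.sum_div, div_self (hsum i).ne']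

lemma continuousOn_weightedTransition {C : Matrix ι ι ℝ}
    (hC : ∀ i j, 0 ≤ C i j) (hC' : ∀ i, ∃ j, 0 < C i j) (hg : ∀ t ∈ Icc (0 : ℝ) 1, 0 < g t)
    (hcont : ContinuousOn g (Icc 0 1)) :
    ContinuousOn (weightedTransition C g) (stdSimplex ℝ ι) := by
  have hterm (i j : ι) : ContinuousOn (fun x : ι → ℝ => C i j * g (x j)) (stdSimplex ℝ ι) :=
    continuousOn_const.mul
      (hcont.comp (by fun_prop) fun _ hx => mem_Icc_of_mem_stdSimplex hx j)
  exact continuousOn_pi.2 fun i => continuousOn_pi.2 fun j =>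
    (hterm i j).div (continuousOn_finsetSum _ fun k _ => hterm i k)
      fun _ hx => (sum_mul_weight_pos (hC i) (hC' i) hg hx).ne'

lemma vecMul_mem_stdSimplex [DecidableEq ι] {M : Matrix ι ι ℝ} (hM : M ∈ rowStochastic ℝ ι)
    (hx : x ∈ stdSimplex ℝ ι) : x ᵥ* M ∈ stdSimplex ℝ ι := by
  refine ⟨nonneg_vecMul_of_mem_rowStochastic hM hx.1, ?_⟩
  simpa [dotProduct, hx.2] using vecMul_dotProduct_one_eq_one_rowStochastic hM (x := x)

lemma one_sub_le_mul_div_sum_of_exp_growth [DecidableEq ι] {d : ι → ℝ} (hd : ∀ k, 0 ≤ d k) {v : ι}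
    (hdv : 0 < d v) (hg : ∀ t ∈ Icc (0 : ℝ) 1, 0 < g t) {δ ε γ : ℝ} (hε : ε ≤ 1 / 2) (hδ : 0 ≤ δ)
    (hgrowth : ∀ a ∈ Icc (0 : ℝ) 1, ∀ b ∈ Icc (0 : ℝ) 1, a ≤ b →
      g a * Real.exp (δ * (b - a)) ≤ g b)
    (hthreshold : (1 - ε) * ∑ k ∈ Finset.univ.erase v, d k ≤
      (ε - γ) * (d v * Real.exp (δ * (1 - 2 * ε))))
    (hx : x ∈ stdSimplex ℝ ι) (hxv : 1 - ε ≤ x v) :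
    1 - ε ≤ (1 - γ) * (d v * g (x v) / ∑ k, d k * g (x k)) := by
  have hI (k : ι) : x k ∈ Icc (0 : ℝ) 1 := mem_Icc_of_mem_stdSimplex hx k
  set E := Real.exp (δ * (1 - 2 * ε))
  have hother : ∀ k ∈ Finset.univ.erase v, d k * g (x k) * E ≤ d k * g (x v) := by
    intro k hk
    have hxk : x k ≤ ε := by
      have hle := Finset.single_le_sum (f := x) (fun j _ => hx.1 j) hk
      have hsum := Finset.add_sum_erase _ x (Finset.mem_univ v)
      linarith [hx.2]
    rw [mul_assoc]
    refine mul_le_mul_of_nonneg_left (le_trans ?_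
      (hgrowth _ (hI k) _ (hI v) (by linarith))) (hd k)
    refine mul_le_mul_of_nonneg_left (Real.exp_le_exp.2 ?_) (hg _ (hI k)).le
    exact mul_le_mul_of_nonneg_left (by linarith) hδ
  have hothers : (1 - ε) * ∑ k ∈ Finset.univ.erase v, d k * g (x k) ≤
      (ε - γ) * (d v * g (x v)) := by
    refine le_of_mul_le_mul_right ?_ (Real.exp_pos (δ * (1 - 2 * ε)))
    calc (1 - ε) * (∑ k ∈ Finset.univ.erase v, d k * g (x k)) * E
        = (1 - ε) * ∑ k ∈ Finset.univ.erase v, d k * g (x k) * E := by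
          rw [mul_assoc, Finset.sum_mul]
      _ ≤ (1 - ε) * ∑ k ∈ Finset.univ.erase v, d k * g (x v) :=
          mul_le_mul_of_nonneg_left (Finset.sum_le_sum hother) (by linarith)
      _ = (1 - ε) * (∑ k ∈ Finset.univ.erase v, d k) * g (x v) := by
          rw [← Finset.sum_mul, mul_assoc]
      _ ≤ (ε - γ) * (d v * E) * g (x v) :=
          mul_le_mul_of_nonneg_right hthreshold (hg _ (hI v)).le
      _ = (ε - γ) * (d v * g (x v)) * E := by ring
  rw [← mul_div_assoc, le_div_iff₀ (sum_mul_weight_pos hd ⟨v, hdv⟩ hg hx),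
    ← Finset.add_sum_erase _ _ (Finset.mem_univ v)]
  linarith

end WeightedTransition

section Damped

variable {n : ℕ} {C : Matrix (Fin n) (Fin n) ℝ} {d : Fin n → ℝ} {γ : ℝ} {g₁ g₂ : ℝ → ℝ}
  {x : Fin n → ℝ}

lemma Md_eq_add (C : Matrix (Fin n) (Fin n) ℝ) (d : Fin n → ℝ) (γ : ℝ) (g₁ g₂ : ℝ → ℝ)
    (x : Fin n → ℝ) : Md C d γ g₁ g₂ x =
      γ • weightedTransition C g₁ x +
        (1 - γ) • weightedTransition (Matrix.of fun _ => d) g₂ x :=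
  rfl

lemma fd_mem_stdSimplex (hC : ∀ i j, 0 ≤ C i j) (hC' : ∀ i, ∃ j, 0 < C i j) (hd : ∀ k, 0 ≤ d k)
    (hd' : ∃ k, 0 < d k) (hγ0 : 0 ≤ γ) (hγ1 : γ ≤ 1) (hg₁ : ∀ t ∈ Icc (0 : ℝ) 1, 0 < g₁ t)
    (hg₂ : ∀ t ∈ Icc (0 : ℝ) 1, 0 < g₂ t) (hx : x ∈ stdSimplex ℝ (Fin n)) :
    fd C d γ g₁ g₂ x ∈ stdSimplex ℝ (Fin n) := by
  refine vecMul_mem_stdSimplex ?_ hx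
  rw [Md_eq_add]
  exact convex_rowStochastic (weightedTransition_mem_rowStochastic hC hC' hg₁ hx)
    (weightedTransition_mem_rowStochastic (fun _ => hd) (fun _ => hd') hg₂ hx)
    hγ0 (sub_nonneg.2 hγ1) (add_sub_cancel γ 1)

lemma continuousOn_fd (hC : ∀ i j, 0 ≤ C i j) (hC' : ∀ i, ∃ j, 0 < C i j) (hd : ∀ k, 0 ≤ d k)
    (hd' : ∃ k, 0 < d k) (γ : ℝ) (hg₁ : ∀ t ∈ Icc (0 : ℝ) 1, 0 < g₁ t)
    (hg₂ : ∀ t ∈ Icc (0 : ℝ) 1, 0 < g₂ t) (hg₁c : ContinuousOn g₁ (Icc 0 1))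
    (hg₂c : ContinuousOn g₂ (Icc 0 1)) :
    ContinuousOn (fd C d γ g₁ g₂) (stdSimplex ℝ (Fin n)) := by
  have hMd : ContinuousOn (Md C d γ g₁ g₂) (stdSimplex ℝ (Fin n)) :=
    ((continuousOn_weightedTransition hC hC' hg₁ hg₁c).const_smul γ).add
      ((continuousOn_weightedTransition (fun _ => hd) (fun _ => hd') hg₂ hg₂c).const_smul (1 - γ))
  have hvecMul : Continuous fun p : (Fin n → ℝ) × Matrix (Fin n) (Fin n) ℝ => p.1 ᵥ* p.2 :=
    continuous_fst.matrix_vecMul continuous_snd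
  exact hvecMul.comp_continuousOn (continuousOn_id.prodMk hMd)

lemma mul_div_sum_le_fd_apply (hC : ∀ i j, 0 ≤ C i j) (hC' : ∀ i, ∃ j, 0 < C i j) (hγ : 0 ≤ γ)
    (hg₁ : ∀ t ∈ Icc (0 : ℝ) 1, 0 < g₁ t) (hx : x ∈ stdSimplex ℝ (Fin n)) (v : Fin n) :
    (1 - γ) * (d v * g₂ (x v) / ∑ k, d k * g₂ (x k)) ≤ fd C d γ g₁ g₂ x v := by
  have hteleport : (x ᵥ* weightedTransition (Matrix.of fun _ => d) g₂ x) v =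
      d v * g₂ (x v) / ∑ k, d k * g₂ (x k) := by
    simp only [Matrix.vecMul, dotProduct, weightedTransition, Matrix.of_apply,
      ← Finset.sum_mul, hx.2, one_mul]
  have hlink : 0 ≤ (x ᵥ* weightedTransition C g₁ x) v :=
    nonneg_vecMul_of_mem_rowStochastic (weightedTransition_mem_rowStochastic hC hC' hg₁ hx) hx.1 v
  rw [fd, Md_eq_add, Matrix.vecMul_add, Matrix.vecMul_smul, Matrix.vecMul_smul, Pi.add_apply,
    Pi.smul_apply, Pi.smul_apply, smul_eq_mul, smul_eq_mul, hteleport]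
  exact le_add_of_nonneg_left (mul_nonneg hγ hlink)

theorem exists_fd_eq_self_of_le_exp {v : Fin n} {ε δ : ℝ} {g₂' : ℝ → ℝ}
    (hε : ε ≤ 1 / 2) (hδ : 0 ≤ δ) (hγ0 : 0 ≤ γ) (hγε : γ < ε)
    (hC : ∀ i j, 0 ≤ C i j) (hC' : ∀ i, ∃ j, 0 < C i j) (hd : ∀ k, 0 ≤ d k) (hdv : 0 < d v)
    (hthreshold : (1 - ε) * ∑ k ∈ Finset.univ.erase v, d k ≤
      (ε - γ) * (d v * Real.exp (δ * (1 - 2 * ε))))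
    (hderiv : ∀ t ∈ Icc (0 : ℝ) 1, HasDerivWithinAt g₂ (g₂' t) (Icc 0 1) t)
    (hg₂ : ∀ t ∈ Icc (0 : ℝ) 1, 0 < g₂ t) (hg₂' : ∀ t ∈ Icc (0 : ℝ) 1, δ * g₂ t ≤ g₂' t)
    (hg₁c : ContinuousOn g₁ (Icc 0 1)) (hg₁ : ∀ t ∈ Icc (0 : ℝ) 1, 0 < g₁ t) :
    ∃ x ∈ stdSimplex ℝ (Fin n), 1 - ε ≤ x v ∧ fd C d γ g₁ g₂ x = x := by
  have hg₂c : ContinuousOn g₂ (Icc 0 1) := fun t ht => (hderiv t ht).continuousWithinAt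
  have hcont : ContinuousOn (fd C d γ g₁ g₂) {x ∈ stdSimplex ℝ (Fin n) | 1 - ε ≤ x v} :=
    (continuousOn_fd hC hC' hd ⟨v, hdv⟩ γ hg₁ hg₂ hg₁c hg₂c).mono (Set.sep_subset _ _)
  have hmaps : MapsTo (fd C d γ g₁ g₂) {x ∈ stdSimplex ℝ (Fin n) | 1 - ε ≤ x v}
      {x ∈ stdSimplex ℝ (Fin n) | 1 - ε ≤ x v} := by
    rintro x ⟨hx, hxv⟩
    refine ⟨fd_mem_stdSimplex hC hC' hd ⟨v, hdv⟩ hγ0 (by linarith) hg₁ hg₂ hx, ?_⟩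
    calc 1 - ε ≤ (1 - γ) * (d v * g₂ (x v) / ∑ k, d k * g₂ (x k)) :=
          one_sub_le_mul_div_sum_of_exp_growth hd hdv hg₂ hε hδ
            (fun _ ha _ hb => exp_mul_le_of_mul_le_deriv (convex_Icc 0 1) hderiv hg₂' ha hb)
            hthreshold hx hxv
      _ ≤ fd C d γ g₁ g₂ x v := mul_div_sum_le_fd_apply hC hC' hγ0 hg₁ hx v
  obtain ⟨x, ⟨hx, hxv⟩, hfix⟩ := exists_isFixedPt_of_mapsTo_stdSimplex_sep
    (by linarith) (by linarith) hcont hmaps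
  exact ⟨x, hx, hxv, hfix⟩

end Damped

theorem damped_fixed_point_near_vertex_small_T2_general {μ ε γ : ℝ} (hε : ε < 1 / 2)
    (hγ0 : 0 ≤ γ) (hγε : γ < ε) :
    ∃ δ : ℝ, 0 < δ ∧
      ∀ (n : ℕ) (v : Fin n) (C : Matrix (Fin n) (Fin n) ℝ) (d : Fin n → ℝ)
        (g₁ g₂ g₂' : ℝ → ℝ),
        (∀ i j, 0 ≤ C i j) → (∀ i, ∃ j, 0 < C i j) → (∀ k, 0 ≤ d k) → 0 < d v →
        (∑ k ∈ Finset.univ.erase v, d k) / d v ≤ μ →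
        (∀ t ∈ Icc (0 : ℝ) 1, HasDerivWithinAt g₂ (g₂' t) (Icc 0 1) t) →
        (∀ t ∈ Icc (0 : ℝ) 1, 0 < g₂ t) → (∀ t ∈ Icc (0 : ℝ) 1, δ * g₂ t ≤ g₂' t) →
        ContinuousOn g₁ (Icc 0 1) → (∀ t ∈ Icc (0 : ℝ) 1, 0 < g₁ t) →
          ∃ x ∈ stdSimplex ℝ (Fin n), 1 - ε ≤ x v ∧ fd C d γ g₁ g₂ x = x := by
  obtain ⟨δ, hδ, hμδ⟩ := exists_pos_le_mul_exp (sub_pos.2 hγε)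
    (by linarith : 0 < 1 - 2 * ε) ((1 - ε) * μ)
  refine ⟨δ, hδ, fun n v C d g₁ g₂ g₂' hC hC' hd hdv hμ =>
    exists_fd_eq_self_of_le_exp hε.le hδ.le hγ0 hγε hC hC' hd hdv ?_⟩
  calc (1 - ε) * ∑ k ∈ Finset.univ.erase v, d k
      ≤ (1 - ε) * (μ * d v) :=
        mul_le_mul_of_nonneg_left ((div_le_iff₀ hdv).1 hμ) (by linarith)
    _ = (1 - ε) * μ * d v := (mul_assoc _ _ _).symm
    _ ≤ (ε - γ) * Real.exp (δ * (1 - 2 * ε)) * d v := mul_le_mul_of_nonneg_right hμδ hdv.le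
    _ = (ε - γ) * (d v * Real.exp (δ * (1 - 2 * ε))) := by ring

/-- In the damped model, with `μ = (Σ_{k≠1} d_k)/d₁` and `0 < γ < ε < 1/2`, for
`L⁻(g₂)` large enough (depending only on `μ`, `ε` and `γ`), the map `f` has a fixed
point in `Σ_ε = {x ∈ Σ : x₁ ≥ 1 − ε}`, whatever the weight function `g₁`. -/
theorem damped_fixed_point_near_vertex_small_T2
    (μ ε γ : ℝ) (hε0 : 0 < ε) (hε1 : ε < 1/2) (hγ0 : 0 < γ) (hγε : γ < ε) :
    ∃ δ : ℝ, 0 < δ ∧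
      ∀ n : ℕ, ∀ C : Matrix (Fin (n+1)) (Fin (n+1)) ℝ,
        (∀ i j, 0 ≤ C i j) → (∀ i, ∃ j, 0 < C i j) →
        ∀ d : Fin (n+1) → ℝ, (∀ i, 0 < d i) →
        (∑ k ∈ Finset.univ.erase 0, d k) / d 0 = μ →
        ∀ g₂ g₂' : ℝ → ℝ, ∀ Lm₂ : ℝ, IsAdmissible g₂ g₂' →
          IsLeast (ratioSet g₂ g₂') Lm₂ → δ ≤ Lm₂ →
          ∀ g₁ g₁' : ℝ → ℝ, IsWeight g₁ g₁' →
            ∃ x ∈ stdSimplex ℝ (Fin (n+1)), 1 - ε ≤ x 0 ∧ fd C d γ g₁ g₂ x = x := by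
  obtain ⟨δ, hδ, hfix⟩ := damped_fixed_point_near_vertex_small_T2_general hε1 hγ0.le hγε
  exact ⟨δ, hδ, fun n C hC hC' d hd hμ g₂ g₂' _ hg₂ hL hδL g₁ _ hg₁ =>
    hfix (n + 1) 0 C d g₁ g₂ g₂' hC hC' (fun k => (hd k).le) (hd 0) hμ.le hg₂.1 hg₂.2.2.2.1
      (hg₂.mul_le_deriv hL hδL) (fun t ht => (hg₁.1 t ht).continuousWithinAt) hg₁.2.2.2.1⟩
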